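/- Let Φ be an irreducible crystallographic root system of rank n and W_0 = W_Φ its Weyl group. If there exist roots β_1,…,β_n ∈ Φ such that W_0 = ⟨s_{β_1},…,s_{β_n}⟩, then for any integers k_1,…,k_n ∈ ℤ the subgroup ⟨s_{β_1,k_1},…,s_{β_n,k_n}⟩ of the affine Weyl group is isomorphic to W_0; moreover the projection p : W → W_0, s_{α,k} ↦ s_α, restricts to an isomorphism on this subgroup. -/

import Mathlib

open scoped RealInnerProductSpace

noncomputable section

variable {V : Type*} [NormedAddCommGroup V] [InnerProductSpace ℝ V]

/-- The coroot `α^∨ = 2α/(α|α)` of a vector `α`. -/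
def coroot (α : V) : V := (2 / ⟪α, α⟫) • α

/-- The affine reflection `s_{α,k} : v ↦ v - ((v|α) - k)α^∨`, as a function. -/
def sAffFun (α : V) (k : ℝ) (v : V) : V := v - (⟪v, α⟫ - k) • coroot α

theorem sAffFun_involutive (α : V) (k : ℝ) : Function.Involutive (sAffFun α k) := by
  intro v
  by_cases h : α = 0
  · simp [sAffFun, coroot, h]
  · have h2 : ⟪α, α⟫ ≠ 0 := by
      intro hz
      exact h (inner_self_eq_zero.mp hz)
    have hr : ⟪coroot α, α⟫ = 2 := by
      simp only [coroot, real_inner_smul_left]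
      field_simp
    simp only [sAffFun, inner_sub_left, real_inner_smul_left, hr]
    have : ⟪v, α⟫ - (⟪v, α⟫ - k) * 2 - k = -(⟪v, α⟫ - k) := by ring
    rw [this, neg_smul, sub_neg_eq_add, sub_add_cancel]

/-- The affine reflection `s_{α,k}` as a permutation of `V`. -/
def sAff (α : V) (k : ℝ) : Equiv.Perm V :=
  Function.Involutive.toPerm _ (sAffFun_involutive α k)

/-- The translation `Tr(x) : v ↦ v + x`, as a function. -/
def trFun (x : V) (v : V) : V := v + x

/-- The translation `Tr(x) : v ↦ v + x`, as a permutation of `V`. -/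
def trPerm (x : V) : Equiv.Perm V := Equiv.addRight x

/-- A crystallographic (reduced) root system in a Euclidean space `V`. -/
structure IsCrystRootSystem (Φ : Set V) : Prop where
  finite : Φ.Finite
  nonempty : Φ.Nonempty
  ne_zero : ∀ α ∈ Φ, α ≠ 0
  spanning : Submodule.span ℝ Φ = ⊤
  refl_mem : ∀ α ∈ Φ, ∀ β ∈ Φ, sAffFun α 0 β ∈ Φ
  reduced : ∀ α ∈ Φ, ∀ c : ℝ, c • α ∈ Φ → c = 1 ∨ c = -1
  cryst : ∀ α ∈ Φ, ∀ β ∈ Φ, ∃ n : ℤ, 2 * ⟪β, α⟫ / ⟪α, α⟫ = (n : ℝ)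

/-- The (finite) Weyl group of `Φ`, generated by the reflections `s_α`. -/
def WeylGroup (Φ : Set V) : Subgroup (Equiv.Perm V) :=
  Subgroup.closure {g | ∃ α ∈ Φ, g = sAff α 0}

/-- The affine Weyl group of `Φ`, generated by all affine reflections `s_{α,k}`, `k ∈ ℤ`. -/
def AffWeylGroup (Φ : Set V) : Subgroup (Equiv.Perm V) :=
  Subgroup.closure {g | ∃ α ∈ Φ, ∃ k : ℤ, g = sAff α k}

/-- The set of reflections of the affine Weyl group. -/
def AffReflections (Φ : Set V) : Set (Equiv.Perm V) :=
  {g | ∃ α ∈ Φ, ∃ k : ℤ, g = sAff α k}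

/-- The coweight lattice `P(Φ^∨) = {x | (x|α) ∈ ℤ for all α ∈ Φ}`. -/
def coweightLattice (Φ : Set V) : Set V :=
  {x | ∀ α ∈ Φ, ∃ n : ℤ, ⟪x, α⟫ = (n : ℝ)}

/-- `Φ` is irreducible: it admits no decomposition into two nonempty orthogonal parts. -/
def IsIrreducibleRS (Φ : Set V) : Prop :=
  ∀ Φ₁ Φ₂ : Set V, Φ₁ ∪ Φ₂ = Φ → (∀ α ∈ Φ₁, ∀ β ∈ Φ₂, ⟪α, β⟫ = 0) →
    Φ₁ = ∅ ∨ Φ₂ = ∅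

/-!
Prescribing the inner products with a linearly independent finite family is always possible, so
the hyperplanes `(v|β_i) = k_i` have a common point `x` as soon as the `β_i` are linearly
independent. Conjugation by the translation `Tr(x)` then carries `⟨s_{β_i}⟩` onto
`⟨s_{β_i,k_i}⟩`, and its inverse is `g ↦ (v ↦ g v - g 0)` because the `s_{β_i}` are linear.

Linear independence comes from counting: every `w ∈ W_Ψ` moves vectors only along the span of `Ψ`,
and `s_α` moves `α` by `-2α`, so `W_Φ ≤ W_Ψ` forces `Φ` into the span of `Ψ`. Hence generating
`W_Φ` by no more than `rank Φ` reflections `s_{β_i}` makes the `β_i` a basis of the span of `Φ`.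
-/

theorem sAff_apply (α : V) (k : ℝ) (v : V) : sAff α k v = v - (⟪v, α⟫ - k) • coroot α := rfl

theorem sAff_zero_apply_self (α : V) : sAff α 0 α = -α := by
  rcases eq_or_ne α 0 with rfl | hα
  · simp [sAff_apply]
  · have hαα : ⟪α, α⟫ ≠ 0 := inner_self_ne_zero.mpr hα
    rw [sAff_apply, coroot, sub_zero, smul_smul, mul_div_cancel₀ _ hαα]
    module

theorem conj_trPerm_apply {E : Type*} [NormedAddCommGroup E] (x : E) (g : Equiv.Perm E) (v : E) :
    MulAut.conj (trPerm x) g v = g (v - x) + x := by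
  simp [trPerm, sub_eq_add_neg]

theorem conj_trPerm_sAff (x α : V) (k : ℝ) :
    MulAut.conj (trPerm x) (sAff α k) = sAff α (k + ⟪x, α⟫) := by
  ext v
  simp only [conj_trPerm_apply, sAff_apply, inner_sub_left]
  module

section WeylGroup

variable {Φ Ψ : Set V} {w : Equiv.Perm V}

theorem sAff_mem_weylGroup {α : V} (hα : α ∈ Φ) : sAff α 0 ∈ WeylGroup Φ :=
  Subgroup.subset_closure ⟨α, hα, rfl⟩

theorem weylGroup_range {ι : Type*} (β : ι → V) :
    WeylGroup (Set.range β) = Subgroup.closure (Set.range fun i => sAff (β i) 0) :=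
  congrArg Subgroup.closure (Set.ext fun g => by simp [eq_comm])

theorem map_sub_of_mem_weylGroup (hw : w ∈ WeylGroup Φ) (u v : V) : w (u - v) = w u - w v := by
  induction hw using Subgroup.closure_induction generalizing u v with
  | mem _ hs =>
    obtain ⟨α, -, rfl⟩ := hs
    simp only [sAff_apply, inner_sub_left]
    module
  | one => rfl
  | mul f g _ _ hf hg => simp only [Equiv.Perm.mul_apply, hg, hf]
  | inv f _ hf => exact f.injective (by simp [hf])

theorem apply_sub_self_mem_span_of_mem_weylGroup (hw : w ∈ WeylGroup Φ) (v : V) :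
    w v - v ∈ Submodule.span ℝ Φ := by
  induction hw using Subgroup.closure_induction generalizing v with
  | mem _ hs =>
    obtain ⟨α, hα, rfl⟩ := hs
    rw [sAff_apply, sub_sub_cancel_left, coroot]
    exact neg_mem (Submodule.smul_mem _ _ (Submodule.smul_mem _ _ (Submodule.subset_span hα)))
  | one => simp
  | mul f g _ _ hf hg => simpa using add_mem (hf (g v)) (hg v)
  | inv f _ hf => simpa using neg_mem (hf (f⁻¹ v))

theorem span_le_span_of_weylGroup_le (h : WeylGroup Φ ≤ WeylGroup Ψ) :
    Submodule.span ℝ Φ ≤ Submodule.span ℝ Ψ := by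
  refine Submodule.span_le.mpr fun α hα => ?_
  have hmem : sAff α 0 α - α ∈ Submodule.span ℝ Ψ :=
    apply_sub_self_mem_span_of_mem_weylGroup (h (sAff_mem_weylGroup hα)) α
  have htwo : sAff α 0 α - α = (-2 : ℝ) • α := by
    rw [sAff_zero_apply_self]
    module
  rw [htwo] at hmem
  exact (Submodule.smul_mem_iff _ (by norm_num)).mp hmem

theorem linearIndependent_of_weylGroup_le {ι : Type*} [Fintype ι] {β : ι → V}
    (h : WeylGroup Φ ≤ WeylGroup (Set.range β))
    (hcard : Fintype.card ι ≤ Module.finrank ℝ (Submodule.span ℝ Φ)) :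
    LinearIndependent ℝ β :=
  have := FiniteDimensional.span_of_finite ℝ (Set.finite_range β)
  linearIndependent_iff_card_le_finrank_span.mpr
    (hcard.trans (Submodule.finrank_mono (span_le_span_of_weylGroup_le h)))

end WeylGroup

section LinearIndependent

variable {ι : Type*} [Finite ι] {β : ι → V}

theorem exists_forall_inner_eq_of_linearIndependent (hβ : LinearIndependent ℝ β) (k : ι → ℝ) :
    ∃ x : V, ∀ i, ⟪x, β i⟫ = k i := by
  have := FiniteDimensional.span_of_finite ℝ (Set.finite_range β)
  let b := Module.Basis.span hβ
  let f := LinearMap.toContinuousLinearMap (b.constr ℝ k)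
  let x := (InnerProductSpace.toDual ℝ (Submodule.span ℝ (Set.range β))).symm f
  refine ⟨x, fun i => ?_⟩
  calc ⟪(x : V), β i⟫ = ⟪x, b i⟫ := by rw [Submodule.coe_inner, Module.Basis.span_apply]
    _ = f (b i) := InnerProductSpace.toDual_symm_apply
    _ = k i := b.constr_basis ℝ k i

theorem exists_closure_sAff_mulEquiv_of_linearIndependent (hβ : LinearIndependent ℝ β)
    (k : ι → ℝ) :
    ∃ φ : Subgroup.closure (Set.range fun i => sAff (β i) (k i)) ≃* WeylGroup (Set.range β),
      ∀ g v, (φ g : Equiv.Perm V) v = (g : Equiv.Perm V) v - (g : Equiv.Perm V) 0 := by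
  obtain ⟨x, hx⟩ := exists_forall_inner_eq_of_linearIndependent hβ k
  let c := MulAut.conj (trPerm x)
  have hmap : (WeylGroup (Set.range β)).map c.toMonoidHom =
      Subgroup.closure (Set.range fun i => sAff (β i) (k i)) := by
    rw [weylGroup_range, MonoidHom.map_closure, ← Set.range_comp]
    simp [Function.comp_def, c, conj_trPerm_sAff, hx, -MulAut.conj_apply]
  let ψ := (c.subgroupMap (WeylGroup (Set.range β))).trans (MulEquiv.subgroupCongr hmap)
  refine ⟨ψ.symm, fun g v => ?_⟩
  obtain ⟨w, rfl⟩ := ψ.surjective g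
  have hψ (u : V) : (ψ w : Equiv.Perm V) u = (w : Equiv.Perm V) (u - x) + x :=
    conj_trPerm_apply x w u
  rw [ψ.symm_apply_apply, hψ, hψ, add_sub_add_right_eq_sub, ← map_sub_of_mem_weylGroup w.2,
    sub_sub_sub_cancel_right, sub_zero]

end LinearIndependent

theorem statement_16_general {ι : Type*} [Fintype ι] (Φ : Set V) (β : ι → V)
    (hcard : Fintype.card ι ≤ Module.finrank ℝ (Submodule.span ℝ Φ))
    (hgen : WeylGroup Φ = Subgroup.closure (Set.range fun i => sAff (β i) 0)) (k : ι → ℝ) :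
    ∃ φ : Subgroup.closure (Set.range fun i => sAff (β i) (k i)) ≃* WeylGroup Φ,
      ∀ g v, (φ g : Equiv.Perm V) v = (g : Equiv.Perm V) v - (g : Equiv.Perm V) 0 := by
  have hW : WeylGroup Φ = WeylGroup (Set.range β) := hgen.trans (weylGroup_range β).symm
  have hβ : LinearIndependent ℝ β := linearIndependent_of_weylGroup_le hW.le hcard
  rw [hW]
  exact exists_closure_sAff_mulEquiv_of_linearIndependent hβ k

theorem statement_16 (Φ : Set V) (hΦ : IsCrystRootSystem Φ) (hirr : IsIrreducibleRS Φ)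
    (n : ℕ) (hrank : Module.finrank ℝ V = n)
    (β : Fin n → V) (hβ : ∀ i, β i ∈ Φ)
    (hgen : WeylGroup Φ = Subgroup.closure (Set.range fun i => sAff (β i) 0))
    (k : Fin n → ℤ) :
    ∃ φ : ↥(Subgroup.closure (Set.range fun i => sAff (β i) (k i : ℝ))) ≃* ↥(WeylGroup Φ),
      ∀ g : ↥(Subgroup.closure (Set.range fun i => sAff (β i) (k i : ℝ))),
        ∀ v : V, ((φ g : Equiv.Perm V)) v = (g : Equiv.Perm V) v - (g : Equiv.Perm V) 0 := by
  have hcard : Fintype.card (Fin n) ≤ Module.finrank ℝ (Submodule.span ℝ Φ) := by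
    rw [hΦ.spanning, finrank_top, hrank, Fintype.card_fin]
  exact statement_16_general Φ β hcard hgen fun i => k i

end
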